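/- arXiv:2211.02766 — 6 statements merged into one kernel-verified Lean document; each statement's English description precedes it below -/
import Mathlib

section
/- In the dispatch LP, suppose (g, p, θ) is primal feasible, the dual variables σ⁻, σ⁺, μ⁻, μ⁺, δ⁻, δ⁺ are nonnegative, and the stationarity and complementary-slackness conditions all hold. Then for every subset Ω ⊆ U of the units: ∑_{i ∈ Ω} λ (loc i) * g i = −∑_{j ∉ Ω} ĉ j * g j + ∑_m λ m * D m − ∑_{j ∉ Ω} μ⁺ j * Ḡ j − ∑_e (σ⁻ e + σ⁺ e) * P̄ e − ∑_m (δ⁻ m + δ⁺ m) * π. In particular the bilinear revenue term ∑_{i ∈ Ω} λ (loc i) * g i of the strategic GenCo owning the units in Ω admits this exact linear expression in the primal and dual variables. -/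
/-!
Pairing the balance equations with the prices `lam` and regrouping by unit and by line gives
`∑ i, lam (loc i) * g i = ∑ m, lam m * D m + ∑ e, (lam (tl e) - lam (hd e)) * p e`. By stationarity
in `p`, the price spread across a line is `nu e + sigm e - sigp e`. Complementary slackness turns
the `sigm`, `sigp` part into `-(sigm e + sigp e) * Pbar e`. For the `nu` part, Ohm's law and
stationarity in `θ` give `∑ e, nu e * p e = ∑ m, (delm m - delp m) * θ m`, which complementary
slackness identifies as `-∑ m, (delm m + delp m) * π`. This expresses the revenue of all units
linearly; stationarity in `g` makes the revenue of each unit outside `Ω` equal to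
`chat j * g j + mup j * Gbar j`, and subtracting these leaves the revenue of `Ω`.
-/

open Finset

/-- Pairing nodal weights with the nodal totals of `h` is a sum over the attached objects,
each weighted by the value at its node. -/
theorem sum_mul_sum_fiber {N A : Type*} [Fintype N] [Fintype A] [DecidableEq N]
    (φ : A → N) (w : N → ℝ) (h : A → ℝ) :
    ∑ m, w m * ∑ a ∈ univ.filter (fun a => φ a = m), h a = ∑ a, w (φ a) * h a := by
  rw [← Finset.sum_fiberwise univ φ]
  refine Finset.sum_congr rfl fun m _ => ?_
  rw [Finset.mul_sum]
  refine Finset.sum_congr rfl fun a ha => ?_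
  rw [(Finset.mem_filter.mp ha).2]

/-- Exact linearization of the strategic GenCo's revenue (equation (A.3)):
at a KKT point of the dispatch LP, for every subset `Ω` of units, the bilinear
revenue `∑_{i ∈ Ω} λ_{loc i} g_i` equals a linear expression in the primal and
dual variables. -/
theorem revenue_linearization
    {N E U : Type*} [Fintype N] [Fintype E] [Fintype U] [DecidableEq N]
    [DecidableEq U]
    (tl hd : E → N) (loc : U → N)
    (chat Gbar : U → ℝ) (D : N → ℝ) (B Pbar : E → ℝ)
    (hGbar : ∀ i, 0 ≤ Gbar i) (hPbar : ∀ e, 0 ≤ Pbar e)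
    (g : U → ℝ) (p : E → ℝ) (θ : N → ℝ)
    -- primal feasibility
    (hbal : ∀ m, ∑ i ∈ univ.filter (fun i => loc i = m), g i
        = D m + ∑ e ∈ univ.filter (fun e => tl e = m), p e
            - ∑ e ∈ univ.filter (fun e => hd e = m), p e)
    (hflow : ∀ e, p e = B e * (θ (tl e) - θ (hd e)))
    (hp_lo : ∀ e, -Pbar e ≤ p e) (hp_hi : ∀ e, p e ≤ Pbar e)
    (hg_lo : ∀ i, 0 ≤ g i) (hg_hi : ∀ i, g i ≤ Gbar i)
    (hθ_lo : ∀ m, -Real.pi ≤ θ m) (hθ_hi : ∀ m, θ m ≤ Real.pi)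
    -- dual variables and their sign constraints
    (lam : N → ℝ) (nu : E → ℝ) (sigm sigp : E → ℝ) (mum mup : U → ℝ)
    (delm delp : N → ℝ)
    (hsigm : ∀ e, 0 ≤ sigm e) (hsigp : ∀ e, 0 ≤ sigp e)
    (hmum : ∀ i, 0 ≤ mum i) (hmup : ∀ i, 0 ≤ mup i)
    (hdelm : ∀ m, 0 ≤ delm m) (hdelp : ∀ m, 0 ≤ delp m)
    -- stationarity
    (hstat_g : ∀ i, chat i - lam (loc i) - mum i + mup i = 0)
    (hstat_p : ∀ e, lam (tl e) - lam (hd e) - nu e - sigm e + sigp e = 0)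
    (hstat_θ : ∀ m, ∑ e ∈ univ.filter (fun e => tl e = m), nu e * B e
        - ∑ e ∈ univ.filter (fun e => hd e = m), nu e * B e
        - delm m + delp m = 0)
    -- complementary slackness
    (hcs_sigm : ∀ e, sigm e * (p e + Pbar e) = 0)
    (hcs_sigp : ∀ e, sigp e * (Pbar e - p e) = 0)
    (hcs_mum : ∀ i, mum i * g i = 0)
    (hcs_mup : ∀ i, mup i * (Gbar i - g i) = 0)
    (hcs_delm : ∀ m, delm m * (θ m + Real.pi) = 0)
    (hcs_delp : ∀ m, delp m * (Real.pi - θ m) = 0) :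
    ∀ Ω : Finset U,
      ∑ i ∈ Ω, lam (loc i) * g i
        = -∑ j ∈ Ωᶜ, chat j * g j + ∑ m, lam m * D m
          - ∑ j ∈ Ωᶜ, mup j * Gbar j
          - ∑ e, (sigm e + sigp e) * Pbar e
          - ∑ m, (delm m + delp m) * Real.pi := by
  intro Ω
  have h_price : ∑ i, lam (loc i) * g i
      = ∑ m, lam m * D m + ∑ e, (lam (tl e) - lam (hd e)) * p e := by
    rw [← sum_mul_sum_fiber loc lam g]
    simp only [hbal, mul_sub, mul_add, sub_mul, Finset.sum_add_distrib, Finset.sum_sub_distrib]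
    rw [sum_mul_sum_fiber tl lam p, sum_mul_sum_fiber hd lam p]
    ring
  have h_line : ∑ e, (lam (tl e) - lam (hd e)) * p e
      = ∑ e, nu e * p e - ∑ e, (sigm e + sigp e) * Pbar e := by
    rw [← Finset.sum_sub_distrib]
    refine Finset.sum_congr rfl fun e _ => ?_
    linear_combination p e * hstat_p e + hcs_sigm e + hcs_sigp e
  have h_angle : ∑ e, nu e * p e = ∑ m, (delm m - delp m) * θ m := by
    calc ∑ e, nu e * p e
        = ∑ e, θ (tl e) * (nu e * B e) - ∑ e, θ (hd e) * (nu e * B e) := by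
          rw [← Finset.sum_sub_distrib]
          refine Finset.sum_congr rfl fun e _ => ?_
          rw [hflow e]
          ring
      _ = ∑ m, (delm m - delp m) * θ m := by
          rw [← sum_mul_sum_fiber tl θ, ← sum_mul_sum_fiber hd θ, ← Finset.sum_sub_distrib]
          refine Finset.sum_congr rfl fun m _ => ?_
          linear_combination θ m * hstat_θ m
  have h_bound : ∑ m, (delm m - delp m) * θ m = -∑ m, (delm m + delp m) * Real.pi := by
    rw [← Finset.sum_neg_distrib]
    refine Finset.sum_congr rfl fun m _ => ?_
    linear_combination hcs_delm m + hcs_delp m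
  have h_compl : ∑ j ∈ Ωᶜ, lam (loc j) * g j
      = ∑ j ∈ Ωᶜ, chat j * g j + ∑ j ∈ Ωᶜ, mup j * Gbar j := by
    rw [← Finset.sum_add_distrib]
    refine Finset.sum_congr rfl fun j _ => ?_
    linear_combination -g j * hstat_g j - hcs_mum j - hcs_mup j
  have h_split := Finset.sum_add_sum_compl Ω fun i => lam (loc i) * g i
  linarith
end

section
/- In the single-demand clearing model with c_A = c_B = 20 (mitigation-unaware strategic bidding), the maximum of the strategic profit (λ − 20) * g_A over all offers ĉ_A with 0 ≤ ĉ_A ≤ 100 and all clearing outcomes is 1600; it is attained at ĉ_A = 100 with g_A = 20, g_B = 30, λ = 100. -/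
/-!
Unit A earns a positive profit only if the price exceeds B's offer of 20, which by stationarity
requires `mupB > 0`. Complementary slackness then puts B at its capacity of 30, so A serves the
residual 20 MW. As A is below its own capacity, `mupA = 0` and the price is at most A's offer,
hence at most the cap 100, which gives the bound `(100 - 20) * 20 = 1600`.
-/

/-- KKT conditions of the two-unit economic dispatch LP (50 MW inelastic
demand, two 30 MW units A and B with offer prices `chatA`, `chatB`):
`gA`, `gB` is an optimal dispatch and `lam` an associated clearing price. -/
def ClearingOutcome (chatA chatB gA gB lam mumA mupA mumB mupB : ℝ) : Prop :=
  gA + gB = 50 ∧ 0 ≤ gA ∧ gA ≤ 30 ∧ 0 ≤ gB ∧ gB ≤ 30 ∧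
  0 ≤ mumA ∧ 0 ≤ mupA ∧ 0 ≤ mumB ∧ 0 ≤ mupB ∧
  chatA - lam - mumA + mupA = 0 ∧ chatB - lam - mumB + mupB = 0 ∧
  mumA * gA = 0 ∧ mupA * (30 - gA) = 0 ∧
  mumB * gB = 0 ∧ mupB * (30 - gB) = 0

/-- Mitigation-unaware strategic bidding with `c_A = c_B = 20`: the maximal
strategic profit over capped offers `0 ≤ ĉ_A ≤ 100` and clearing outcomes is
1600, attained at `ĉ_A = 100` with `g_A = 20`, `g_B = 30`, `λ = 100`. -/
theorem unaware_bidding_max_profit :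
    IsGreatest {profit : ℝ | ∃ chatA gA gB lam mumA mupA mumB mupB : ℝ,
      0 ≤ chatA ∧ chatA ≤ 100 ∧
      ClearingOutcome chatA 20 gA gB lam mumA mupA mumB mupB ∧
      profit = (lam - 20) * gA} 1600 ∧
    (∃ mumA mupA mumB mupB : ℝ,
      ClearingOutcome 100 20 20 30 100 mumA mupA mumB mupB ∧
      ((100 : ℝ) - 20) * 20 = 1600) := by
  have hout : ClearingOutcome 100 20 20 30 100 0 0 0 80 := by
    unfold ClearingOutcome; norm_num
  refine ⟨⟨⟨100, 20, 30, 100, 0, 0, 0, 80, by norm_num, le_rfl, hout, by norm_num⟩, ?_⟩,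
    0, 0, 0, 80, hout, by norm_num⟩
  rintro _ ⟨chatA, gA, gB, lam, mumA, mupA, mumB, mupB, -, hcap,
    ⟨hbal, hA0, -, -, -, hmumA, -, hmumB, -, hsA, hsB, -, hcA, -, hcB⟩, rfl⟩
  rcases mul_eq_zero.mp hcB with hB | hB
  · -- B is not scarce, so the price is at most B's offer and A earns no positive profit.
    have hlam : lam - 20 ≤ 0 := by linarith
    linarith [mul_nonpos_of_nonpos_of_nonneg hlam hA0]
  · -- B is full, so A serves the residual 20 MW below its own capacity and `lam ≤ chatA`.
    have hg : gA = 20 := by linarith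
    subst hg
    have hmupA : mupA = 0 := by linarith
    linarith
end

section
/- In the single-demand clearing model with c_A = c_B = 20, for every conduct-test threshold x with 0 < x ≤ 80, the maximum of the strategic profit (λ − 20) * g_A over all offers ĉ_A with 0 ≤ ĉ_A ≤ 100 and |ĉ_A − 20| ≤ x and all clearing outcomes is 20 * x; it is attained at ĉ_A = 20 + x with g_A = 20, g_B = 30, λ = 20 + x. (In particular, for the 100% threshold x = 20 the optimal conduct-aware profit is 400.) -/
/-- Conduct-aware bidding with `c_A = c_B = 20`: for every conduct-test
threshold `0 < x ≤ 80`, the maximal strategic profit subject to the conduct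
test `|ĉ_A - 20| ≤ x` is `20 * x`, attained at `ĉ_A = 20 + x` with
`g_A = 20`, `g_B = 30`, `λ = 20 + x`. -/
theorem conduct_aware_max_profit (x : ℝ) (hx0 : 0 < x) (hx : x ≤ 80) :
    IsGreatest {profit : ℝ | ∃ chatA gA gB lam mumA mupA mumB mupB : ℝ,
      0 ≤ chatA ∧ chatA ≤ 100 ∧ |chatA - 20| ≤ x ∧
      ClearingOutcome chatA 20 gA gB lam mumA mupA mumB mupB ∧
      profit = (lam - 20) * gA} (20 * x) ∧
    (∃ mumA mupA mumB mupB : ℝ,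
      ClearingOutcome (20 + x) 20 20 30 (20 + x) mumA mupA mumB mupB ∧
      ((20 + x) - 20) * 20 = 20 * x) := by
  -- When A offers `20 + x` and sets the price, B's capacity rent is `mupB = x`.
  have key : ClearingOutcome (20 + x) 20 20 30 (20 + x) 0 0 0 x := by
    refine ⟨?_, ?_, ?_, ?_, ?_, ?_, ?_, ?_, ?_, ?_, ?_, ?_, ?_, ?_, ?_⟩ <;> linarith
  refine ⟨⟨⟨20 + x, 20, 30, 20 + x, 0, 0, 0, x, by linarith, by linarith, ?_, key, by ring⟩, ?_⟩,
    0, 0, 0, x, key, by ring⟩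
  · rw [add_sub_cancel_left, abs_of_pos hx0]
  · rintro _ ⟨chatA, gA, gB, lam, mumA, mupA, mumB, mupB, -, -, hconduct, hclear, rfl⟩
    obtain ⟨hbal, -, hgA, -, hgB, -, -, -, -, hstA, hstB, hmumA, hmupA, hmumB, hmupB⟩ := hclear
    have hA0 : mumA = 0 := (mul_eq_zero.mp hmumA).resolve_right (by linarith)
    have hB0 : mumB = 0 := (mul_eq_zero.mp hmumB).resolve_right (by linarith)
    rcases mul_eq_zero.mp hmupB with h | h
    · have hlam : lam = 20 := by linarith
      rw [hlam]
      linarith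
    · have hgA20 : gA = 20 := by linarith
      have hA1 : mupA = 0 := (mul_eq_zero.mp hmupA).resolve_right (by linarith)
      have hoffer := (abs_le.mp hconduct).2
      rw [hgA20]
      linarith
end

section
/- In the single-demand clearing model with c_A = 10 and c_B = 20, for every conduct-test threshold x with 0 < x ≤ 90, the maximum of the strategic profit (λ − 10) * g_A over all offers ĉ_A with 0 ≤ ĉ_A ≤ 100 and |ĉ_A − 10| ≤ x and all clearing outcomes equals max 300 (20 * x). (In particular, for the 100% threshold x = 10 the optimal conduct-aware profit is 300, attained with g_A = 30 and λ = 20, and the profit exceeds 300 only once x > 15.) -/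
/-- Conduct-aware bidding with heterogeneous costs `c_A = 10`, `c_B = 20`:
for every conduct-test threshold `0 < x ≤ 90`, the maximal strategic profit
subject to the conduct test `|ĉ_A - 10| ≤ x` equals `max 300 (20 * x)`. -/
theorem conduct_aware_heterogeneous_max_profit (x : ℝ) (hx0 : 0 < x) (hx : x ≤ 90) :
    IsGreatest {profit : ℝ | ∃ chatA gA gB lam mumA mupA mumB mupB : ℝ,
      0 ≤ chatA ∧ chatA ≤ 100 ∧ |chatA - 10| ≤ x ∧
      ClearingOutcome chatA 20 gA gB lam mumA mupA mumB mupB ∧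
      profit = (lam - 10) * gA} (max 300 (20 * x)) := by
  constructor
  · rcases le_total x 15 with h | h
    · -- Truthful bidding: A is dispatched at capacity and B sets the price 20.
      rw [max_eq_left (by linarith)]
      refine ⟨10, 30, 20, 20, 0, 10, 0, 0, by norm_num, by norm_num, ?_, ?_, by norm_num⟩
      · simpa using hx0.le
      · norm_num [ClearingOutcome]
    · -- Bidding at the conduct limit: B is dispatched at capacity and A sets the price `10 + x`.
      rw [max_eq_right (by linarith)]
      refine ⟨10 + x, 20, 30, 10 + x, 0, 0, 0, x - 10, by linarith, by linarith, ?_, ?_, by ring⟩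
      · simp [abs_of_pos hx0]
      · refine ⟨?_, ?_, ?_, ?_, ?_, ?_, ?_, ?_, ?_, ?_, ?_, ?_, ?_, ?_, ?_⟩ <;> linarith
  · rintro _ ⟨chatA, gA, gB, lam, mumA, mupA, mumB, mupB, -, -, habs,
      ⟨hbal, -, hA30, -, hB30, -, -, -, -, hA, hB, hmA, hpA, hmB, hpB⟩, rfl⟩
    have hchat := (abs_le.mp habs).2
    have hmumA : mumA = 0 := (mul_eq_zero.mp hmA).resolve_right (by intro h; linarith)
    have hmumB : mumB = 0 := (mul_eq_zero.mp hmB).resolve_right (by intro h; linarith)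
    rcases mul_eq_zero.mp hpB with hmupB | hcap
    · have hlam : lam = 20 := by linarith
      refine le_max_of_le_left ?_
      rw [hlam]
      linarith
    · have hgA : gA = 20 := by linarith
      have hmupA : mupA = 0 := (mul_eq_zero.mp hpA).resolve_right (by intro h; linarith)
      refine le_max_of_le_right ?_
      rw [hgA]
      linarith
end

section
/- In the single-demand clearing model with c_A = 10 and c_B = 20, for every impact-test threshold y with 0 < y ≤ 80, the maximum of the strategic profit (λ − 10) * g_A over all offers ĉ_A with 0 ≤ ĉ_A ≤ 100 and all clearing outcomes whose price additionally satisfies |λ − 20| ≤ y equals max 300 (200 + 20 * y), the value 200 + 20*y being attained at ĉ_A = 20 + y with g_A = 20, g_B = 30, λ = 20 + y. (In particular, for y = 20 the optimal impact-aware profit is 600, exceeding the conduct-aware profit of 300 for the same 100% threshold, so impact-aware bidding strictly outperforms conduct-aware bidding for the off-the-margin unit.) -/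
theorem clearingOutcome_withhold (y : ℝ) (hy0 : 0 < y) :
    ClearingOutcome (20 + y) 20 20 30 (20 + y) 0 0 0 y := by
  unfold ClearingOutcome
  norm_num
  exact hy0.le

theorem clearingOutcome_full : ClearingOutcome 20 20 30 20 20 0 0 0 0 := by
  unfold ClearingOutcome
  norm_num

/-- The upper bound: unit B is either marginal, which fixes the price at `20`, or at capacity,
which fixes `g_A = 20`. -/
theorem profit_le {y chatA gA gB lam mumA mupA mumB mupB : ℝ}
    (h : ClearingOutcome chatA 20 gA gB lam mumA mupA mumB mupB) (hl : |lam - 20| ≤ y) :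
    (lam - 10) * gA ≤ max 300 (200 + 20 * y) := by
  obtain ⟨hsum, -, hA, -, -, -, -, -, -, -, hB, -, -, hmB, hpB⟩ := h
  have hm : mumB = 0 := by
    rcases mul_eq_zero.mp hmB with h | h <;> linarith
  rcases mul_eq_zero.mp hpB with h | h
  · have hlam : lam = 20 := by linarith
    subst hlam
    exact le_max_of_le_left (by linarith)
  · have hgA : gA = 20 := by linarith
    subst hgA
    exact le_max_of_le_right (by linarith [(abs_le.mp hl).2])

/-- Impact-aware bidding with heterogeneous costs `c_A = 10`, `c_B = 20`:
for every impact-test threshold `0 < y ≤ 80`, the maximal strategic profit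
over clearing outcomes whose price satisfies `|λ - 20| ≤ y` equals
`max 300 (200 + 20 * y)`, the value `200 + 20 * y` being attained at
`ĉ_A = 20 + y` with `g_A = 20`, `g_B = 30`, `λ = 20 + y`. -/
theorem impact_aware_max_profit (y : ℝ) (hy0 : 0 < y) (hy : y ≤ 80) :
    IsGreatest {profit : ℝ | ∃ chatA gA gB lam mumA mupA mumB mupB : ℝ,
      0 ≤ chatA ∧ chatA ≤ 100 ∧
      ClearingOutcome chatA 20 gA gB lam mumA mupA mumB mupB ∧
      |lam - 20| ≤ y ∧
      profit = (lam - 10) * gA} (max 300 (200 + 20 * y)) ∧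
    (∃ mumA mupA mumB mupB : ℝ,
      ClearingOutcome (20 + y) 20 20 30 (20 + y) mumA mupA mumB mupB ∧
      |(20 + y : ℝ) - 20| ≤ y ∧
      ((20 + y) - 10) * 20 = 200 + 20 * y) := by
  have hy' : |(20 + y : ℝ) - 20| ≤ y := by
    rw [add_sub_cancel_left, abs_of_pos hy0]
  refine ⟨⟨?_, ?_⟩, 0, 0, 0, y, clearingOutcome_withhold y hy0, hy', by ring⟩
  · rcases max_choice (300 : ℝ) (200 + 20 * y) with h | h <;> rw [h]
    · exact ⟨20, 30, 20, 20, 0, 0, 0, 0, by norm_num, by norm_num, clearingOutcome_full,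
        by simpa using hy0.le, by norm_num⟩
    · exact ⟨20 + y, 20, 30, 20 + y, 0, 0, 0, y, by linarith, by linarith,
        clearingOutcome_withhold y hy0, hy', by ring⟩
  · rintro _ ⟨chatA, gA, gB, lam, mumA, mupA, mumB, mupB, -, -, hc, hl, rfl⟩
    exact profit_le hc hl
end

section
/- In the congested two-bus clearing model, for every conduct-test threshold x with 0 < x ≤ 80, the maximum of the strategic profit (λ₁ − 20) * g_A over all offers ĉ_A with 0 ≤ ĉ_A ≤ 100 and |ĉ_A − 20| ≤ x and all clearing outcomes is 27 * x; it is attained at ĉ_A = 20 + x with g_A = 27, g_B = 23, p = 23, λ₁ = 20 + x, λ₂ = 20. (In particular, for the 100% threshold x = 20 the optimal conduct-aware profit is 540, strictly exceeding the profit of 400 in the corresponding uncongested case: congestion puts the strategic unit in a better position for profit-seeking.) -/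
/-!
The balance and capacity constraints force `20 ≤ p ≤ 23`, so unit B runs strictly inside its
limits (hence `λ₂ = 20`), unit A produces a positive amount (hence `μ⁻_A = 0`), and the lower
line limit is slack (hence `λ₁ = 20 + σ⁺`). If the line is not priced, `σ⁺ = 0`, then `λ₁ = 20`
and the profit vanishes. Otherwise `p = 23`, so `g_A = 27 < 30`, unit A is marginal with
`λ₁ = ĉ_A ≤ 20 + x`, and the profit is at most `27 * x`.
-/

/-- KKT conditions of the congested two-bus dispatch LP: bus 1 carries a
50 MW demand and unit A (30 MW cap); bus 2 carries unit B (30 MW cap,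
offering its true marginal cost `chatB`); the line from bus 2 to bus 1 has
limit 23 MW. `(gA, gB, p)` is an optimal dispatch with locational marginal
prices `lam1`, `lam2`. -/
def CongestedOutcome (chatA chatB gA gB p lam1 lam2 sigm sigp
    mumA mupA mumB mupB : ℝ) : Prop :=
  gA + p = 50 ∧ gB = p ∧ -23 ≤ p ∧ p ≤ 23 ∧
  0 ≤ gA ∧ gA ≤ 30 ∧ 0 ≤ gB ∧ gB ≤ 30 ∧
  0 ≤ sigm ∧ 0 ≤ sigp ∧ 0 ≤ mumA ∧ 0 ≤ mupA ∧ 0 ≤ mumB ∧ 0 ≤ mupB ∧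
  chatA - lam1 - mumA + mupA = 0 ∧
  chatB - lam2 - mumB + mupB = 0 ∧
  lam2 - lam1 - sigm + sigp = 0 ∧
  sigm * (p + 23) = 0 ∧ sigp * (23 - p) = 0 ∧
  mumA * gA = 0 ∧ mupA * (30 - gA) = 0 ∧
  mumB * gB = 0 ∧ mupB * (30 - gB) = 0

/-- Conduct-aware bidding in the congested two-bus network: for every
conduct-test threshold `0 < x ≤ 80`, the maximal strategic profit subject to
`|ĉ_A - 20| ≤ x` is `27 * x`, attained at `ĉ_A = 20 + x` with `g_A = 27`,
`g_B = 23`, `p = 23`, `λ₁ = 20 + x`, `λ₂ = 20`. -/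
theorem congested_conduct_aware_max_profit (x : ℝ) (hx0 : 0 < x) (hx : x ≤ 80) :
    IsGreatest {profit : ℝ | ∃ chatA gA gB p lam1 lam2 sigm sigp
        mumA mupA mumB mupB : ℝ,
      0 ≤ chatA ∧ chatA ≤ 100 ∧ |chatA - 20| ≤ x ∧
      CongestedOutcome chatA 20 gA gB p lam1 lam2 sigm sigp
        mumA mupA mumB mupB ∧
      profit = (lam1 - 20) * gA} (27 * x) ∧
    (∃ sigm sigp mumA mupA mumB mupB : ℝ,
      CongestedOutcome (20 + x) 20 27 23 23 (20 + x) 20 sigm sigp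
        mumA mupA mumB mupB ∧
      ((20 + x) - 20) * 27 = 27 * x) := by
  -- the line carries 23 MW at full capacity, with congestion rent `σ⁺ = x` when `ĉ_A = 20 + x`
  have hout : CongestedOutcome (20 + x) 20 27 23 23 (20 + x) 20 0 x 0 0 0 0 := by
    unfold CongestedOutcome
    norm_num
    exact hx0.le
  refine ⟨⟨?_, ?_⟩, 0, x, 0, 0, 0, 0, hout, by ring⟩
  · refine ⟨20 + x, 27, 23, 23, 20 + x, 20, 0, x, 0, 0, 0, 0, by linarith, by linarith, ?_,
      hout, by ring⟩
    rw [add_sub_cancel_left, abs_of_pos hx0]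
  · rintro _ ⟨chatA, gA, gB, p, lam1, lam2, sigm, sigp, mumA, mupA, mumB, mupB, -, -, habs,
      ⟨hbal, hgB, -, hp, -, hgA, -, -, -, -, -, -, -, -, hA, hB, hline,
        hsigm, hsigp, hmumA, hmupA, hmumB, hmupB⟩, rfl⟩
    have hsigm0 : sigm = 0 := (mul_eq_zero.mp hsigm).resolve_right (by linarith)
    have hmumA0 : mumA = 0 := (mul_eq_zero.mp hmumA).resolve_right (by linarith)
    have hmumB0 : mumB = 0 := (mul_eq_zero.mp hmumB).resolve_right (by linarith)
    have hmupB0 : mupB = 0 := (mul_eq_zero.mp hmupB).resolve_right (by linarith)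
    rcases mul_eq_zero.mp hsigp with hs | hs
    · have hlam : lam1 = 20 := by linarith
      rw [hlam]
      linarith
    · have hg : gA = 27 := by linarith
      have hmupA0 : mupA = 0 := (mul_eq_zero.mp hmupA).resolve_right (by linarith)
      have hchat := (abs_le.mp habs).2
      rw [hg]
      linarith
end
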